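/- Let N be a neutrix over the hyperreals with N ≠ ℝ* and let u be a flexible sequence. Then u N-converges to some external number if and only if u is N-Cauchy. -/

import Mathlib

/-!
The forward direction halves `ε`, which is possible because the elements above a neutrix `N` are
stable under halving.

For completeness, pick `a n ∈ u n`; it suffices to find one point `b` with `|a n - b|` eventually
below every `ε > N`, since `{b}` is an external number. Let `D` be the countable set of the
distances `|a m - a n|` that exceed `N`.

* If some `ε > N` lies strictly below all of `D`, the Cauchy condition at `ε` forces the distances
  between late terms to be bounded by elements of `N`, so any late term serves as `b`.
* Otherwise `D` is coinitial among the elements above `N`. The Cauchy condition then reduces to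
  countably many radii, and `b` is a common point of countably many intervals that pairwise
  meet. Such a point exists because `ℝ*` is `ℵ₁`-saturated
  (`Hyperreal.exists_between_sequences`).
-/

open Pointwise

/-- A neutrix: a convex additive subgroup of the hyperreals. -/
def IsNeutrix (N : Set Hyperreal) : Prop :=
  (0 : Hyperreal) ∈ N ∧
  (∀ x ∈ N, ∀ y ∈ N, x + y ∈ N) ∧
  (∀ x ∈ N, -x ∈ N) ∧
  (∀ x ∈ N, ∀ y ∈ N, ∀ z : Hyperreal, x ≤ z → z ≤ y → z ∈ N)

/-- An external number: a set of the form a + A with A a neutrix. -/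
def IsExternal (α : Set Hyperreal) : Prop :=
  ∃ (a : Hyperreal) (A : Set Hyperreal), IsNeutrix A ∧ α = (a + ·) '' A

/-- α ≤ β : every element of α is below some element of β. -/
def SetLE (α β : Set Hyperreal) : Prop := ∀ x ∈ α, ∃ y ∈ β, x ≤ y

/-- α < β : every element of α is below every element of β. -/
def SetLT (α β : Set Hyperreal) : Prop := ∀ x ∈ α, ∀ y ∈ β, x < y

/-- α ≥ β : every element of α is above some element of β. -/
def SetGE (α β : Set Hyperreal) : Prop := ∀ x ∈ α, ∃ y ∈ β, y ≤ x

/-- α > β : every element of α is above every element of β. -/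
def SetGT (α β : Set Hyperreal) : Prop := ∀ x ∈ α, ∀ y ∈ β, y < x

/-- ε > N : ε exceeds every element of the neutrix N. -/
def GtNeutrix (ε : Hyperreal) (N : Set Hyperreal) : Prop := ∀ m ∈ N, m < ε

/-- A flexible sequence: all values are external numbers. -/
def Flexible (u : ℕ → Set Hyperreal) : Prop := ∀ n, IsExternal (u n)

/-- N-convergence of a sequence of subsets of the hyperreals to a set α. -/
def NConv (N : Set Hyperreal) (u : ℕ → Set Hyperreal) (α : Set Hyperreal) : Prop :=
  ∀ ε : Hyperreal, GtNeutrix ε N →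
    ∃ n₀ : ℕ, ∀ n ≥ n₀, ∀ x ∈ u n, ∀ y ∈ α, |x - y| < ε

/-- Strong convergence: the terms are eventually included in the limit set. -/
def StrongConv (u : ℕ → Set Hyperreal) (α : Set Hyperreal) : Prop :=
  ∃ n₀ : ℕ, ∀ n ≥ n₀, u n ⊆ α

/-- N-Cauchy sequences of sets. -/
def NCauchy (N : Set Hyperreal) (w : ℕ → Set Hyperreal) : Prop :=
  ∀ ε : Hyperreal, GtNeutrix ε N →
    ∃ k : ℕ, ∀ m ≥ k, ∀ n ≥ k, ∀ x ∈ w m, ∀ y ∈ w n, |x - y| < ε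

/-- Strongly N-Cauchy sequences of sets. -/
def StrongNCauchy (N : Set Hyperreal) (w : ℕ → Set Hyperreal) : Prop :=
  ∃ k : ℕ, ∀ m ≥ k, ∀ n ≥ k, w n - w m ⊆ N

open Filter in
/-- Countable saturation of the order of `ℝ*`: a countable gap can be filled. -/
theorem Hyperreal.exists_between_sequences (l h : ℕ → Hyperreal) (hlh : ∀ i j, l i < h j) :
    ∃ a, ∀ i, l i < a ∧ a < h i := by
  classical
  choose L hL using fun i => Hyperreal.ofSeq_surjective (l i)
  choose H hH using fun i => Hyperreal.ofSeq_surjective (h i)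
  -- At the coordinate `t`, separate as many of the first `t` constraints as are consistent there.
  let P : ℕ → ℕ → Prop := fun t n => ∀ i < n, ∀ j < n, L i t < H j t
  let g : ℕ → ℕ := fun t => Nat.findGreatest (P t) t
  have hg : ∀ t, P t (g t) := fun t =>
    Nat.findGreatest_spec (P := P t) (Nat.zero_le t) (by intro i hi; omega)
  have hx : ∀ t, ∃ x : ℝ, ∀ i < g t, L i t < x ∧ x < H i t := by
    intro t
    obtain ⟨x, hx1, hx2⟩ := Order.exists_between_finsets
      (lo := (Finset.range (g t)).image (fun i => L i t))
      (hi := (Finset.range (g t)).image (fun i => H i t)) (by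
        intro x hx y hy
        simp only [Finset.mem_image, Finset.mem_range] at hx hy
        obtain ⟨i, hi, rfl⟩ := hx
        obtain ⟨j, hj, rfl⟩ := hy
        exact hg t i hi j hj)
    exact ⟨x, fun i hi =>
      ⟨hx1 _ (Finset.mem_image_of_mem _ (Finset.mem_range.2 hi)),
        hx2 _ (Finset.mem_image_of_mem _ (Finset.mem_range.2 hi))⟩⟩
  choose x hx using hx
  have hP : ∀ n, ∀ᶠ t in (hyperfilter ℕ : Filter ℕ), P t n := by
    intro n
    have : ∀ i ∈ Set.Iio n, ∀ᶠ t in (hyperfilter ℕ : Filter ℕ), ∀ j ∈ Set.Iio n,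
        L i t < H j t := by
      intro i _
      rw [eventually_all_finite (Set.finite_Iio n)]
      intro j _
      have := hlh i j
      rw [← hL, ← hH] at this
      exact Hyperreal.ofSeq_lt_ofSeq.1 this
    exact (eventually_all_finite (Set.finite_Iio n)).2 this
  have hlarge : ∀ n, ∀ᶠ t in (hyperfilter ℕ : Filter ℕ), n ≤ t := by
    intro n
    have h1 : ∀ᶠ t in (cofinite : Filter ℕ), n ≤ t := by
      rw [Nat.cofinite_eq_atTop]; exact eventually_ge_atTop n
    exact h1.filter_mono hyperfilter_le_cofinite
  have key : ∀ i, ∀ᶠ t in (hyperfilter ℕ : Filter ℕ), L i t < x t ∧ x t < H i t := by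
    intro i
    filter_upwards [hP (i + 1), hlarge (i + 1)] with t h1 h2
    exact hx t i (Nat.le_findGreatest (P := P t) h2 h1)
  refine ⟨Hyperreal.ofSeq x, fun i => ?_⟩
  rw [← hL, ← hH, Hyperreal.ofSeq_lt_ofSeq, Hyperreal.ofSeq_lt_ofSeq]
  exact ⟨(key i).mono fun t ht => ht.1, (key i).mono fun t ht => ht.2⟩

theorem GtNeutrix.half {N : Set Hyperreal} (hN : IsNeutrix N) {ε : Hyperreal}
    (h : GtNeutrix ε N) : GtNeutrix (ε / 2) N := by
  intro m hm
  have := h _ (hN.2.1 m hm m hm)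
  linarith

theorem IsExternal.nonempty {α : Set Hyperreal} (h : IsExternal α) : α.Nonempty := by
  obtain ⟨a, A, hA, rfl⟩ := h
  exact ⟨_, Set.mem_image_of_mem _ hA.1⟩

theorem isExternal_singleton (b : Hyperreal) : IsExternal {b} := by
  refine ⟨b, {0}, ⟨rfl, ?_, ?_, ?_⟩, by simp⟩
  · rintro x rfl y rfl; simp
  · rintro x rfl; simp
  · rintro x rfl y rfl z h1 h2; exact le_antisymm h2 h1

theorem IsNeutrix.exists_gt {N : Set Hyperreal} (hN : IsNeutrix N) (hNR : N ≠ Set.univ) :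
    ∃ ε, GtNeutrix ε N := by
  obtain ⟨x, hx⟩ := (Set.ne_univ_iff_exists_notMem N).1 hNR
  refine ⟨|x|, fun m hm => ?_⟩
  by_contra! hle
  exact hx (hN.2.2.2 _ (hN.2.2.1 m hm) m hm x (abs_le.1 hle).1 (abs_le.1 hle).2)

/-- Completeness for sequences of points. -/
theorem exists_limit_point {N : Set Hyperreal} (hN : IsNeutrix N) (hNR : N ≠ Set.univ)
    (a : ℕ → Hyperreal)
    (ha : ∀ ε, GtNeutrix ε N → ∃ k, ∀ m ≥ k, ∀ n ≥ k, |a m - a n| < ε) :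
    ∃ b, ∀ ε, GtNeutrix ε N → ∃ k, ∀ n ≥ k, |a n - b| < ε := by
  let D : Set Hyperreal :=
    {d | GtNeutrix d N} ∩ Set.range (fun p : ℕ × ℕ => |a p.1 - a p.2|)
  by_cases hD : ∃ ε, GtNeutrix ε N ∧ ∀ d ∈ D, ε < d
  · obtain ⟨ε, hε, hεD⟩ := hD
    obtain ⟨k, hk⟩ := ha ε hε
    refine ⟨a k, fun δ hδ => ⟨k, fun n hn => ?_⟩⟩
    have h1 : ¬ GtNeutrix |a n - a k| N := fun h =>
      lt_asymm (hk n hn k le_rfl) (hεD _ ⟨h, (n, k), rfl⟩)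
    unfold GtNeutrix at h1
    push Not at h1
    obtain ⟨m, hm, hle⟩ := h1
    exact hle.trans_lt (hδ m hm)
  · push Not at hD
    have hne : D.Nonempty := by
      obtain ⟨ε, hε⟩ := hN.exists_gt hNR
      obtain ⟨d, hd, -⟩ := hD ε hε
      exact ⟨d, hd⟩
    have hcount : D.Countable := (Set.countable_range _).mono Set.inter_subset_right
    obtain ⟨r, hr⟩ := hcount.exists_eq_range hne
    have hrN : ∀ i, GtNeutrix (r i) N := fun i =>
      (show r i ∈ D from hr ▸ Set.mem_range_self i).1
    choose k hk using fun i => ha (r i) (hrN i)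
    obtain ⟨b, hb⟩ := Hyperreal.exists_between_sequences
      (fun i => a (k i) - r i) (fun i => a (k i) + r i) (by
        intro i j
        -- The term of index `max (k i) (k j)` lies in both intervals.
        have h1 := abs_lt.1 (hk i (k i) le_rfl _ (le_max_left (k i) (k j)))
        have h2 := abs_lt.1 (hk j (k j) le_rfl _ (le_max_right (k i) (k j)))
        linarith [h1.2, h2.1])
    refine ⟨b, fun ε hε => ?_⟩
    obtain ⟨d, hd, hdε⟩ := hD (ε / 2) (hε.half hN)
    rw [hr] at hd
    obtain ⟨i, rfl⟩ := hd
    refine ⟨k i, fun n hn => ?_⟩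
    have h1 := abs_lt.1 (hk i n hn (k i) le_rfl)
    have h2 := hb i
    rw [abs_lt]
    constructor <;> linarith [h1.1, h1.2, h2.1, h2.2]

theorem cauchy_completeness (N : Set Hyperreal) (hN : IsNeutrix N)
    (hNR : N ≠ Set.univ)
    (u : ℕ → Set Hyperreal) (hu : Flexible u) :
    (∃ α : Set Hyperreal, IsExternal α ∧ NConv N u α) ↔ NCauchy N u := by
  constructor
  · rintro ⟨α, hα, hconv⟩ ε hε
    obtain ⟨z, hz⟩ := hα.nonempty
    obtain ⟨k, hk⟩ := hconv (ε / 2) (hε.half hN)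
    refine ⟨k, fun m hm n hn x hx y hy => ?_⟩
    have h1 := abs_lt.1 (hk m hm x hx z hz)
    have h2 := abs_lt.1 (hk n hn y hy z hz)
    rw [abs_lt]
    constructor <;> linarith [h1.1, h1.2, h2.1, h2.2]
  · intro hC
    choose a ha using fun n => (hu n).nonempty
    obtain ⟨b, hb⟩ := exists_limit_point hN hNR a (by
      intro ε hε
      obtain ⟨k, hk⟩ := hC ε hε
      exact ⟨k, fun m hm n hn => hk m hm n hn _ (ha m) _ (ha n)⟩)
    refine ⟨{b}, isExternal_singleton b, fun ε hε => ?_⟩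
    obtain ⟨k₁, h₁⟩ := hC (ε / 2) (hε.half hN)
    obtain ⟨k₂, h₂⟩ := hb (ε / 2) (hε.half hN)
    refine ⟨max k₁ k₂, fun n hn x hx y hy => ?_⟩
    obtain rfl : y = b := hy
    have hn₁ := (le_max_left k₁ k₂).trans hn
    have h3 := abs_lt.1 (h₁ n hn₁ n hn₁ x hx _ (ha n))
    have h4 := abs_lt.1 (h₂ n ((le_max_right k₁ k₂).trans hn))
    rw [abs_lt]
    constructor <;> linarith [h3.1, h3.2, h4.1, h4.2]
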